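/- Let [a,b] ⊂ ℝ be a compact interval and let E ⊂ (a,b) be a set of Lebesgue measure zero. Suppose F : [a,b] → ℝ is differentiable at every point of [a,b] \ E with derivative f there, and suppose F has negligible variation on E, i.e., for every ε > 0 there exists a gauge δ : [a,b] → (0,∞) such that Σ_{([u,v],x) ∈ P|_E} |F(v) − F(u)| < ε for every P ∈ 𝒫_δ[a,b]|_E. Then the extended function f_ex (equal to f off E and to 0 on E) is generalized Riemann (Henstock–Kurzweil) integrable on [a,b] with integral equal to F(b) − F(a). -/

import Mathlib

open scoped Classical

/-- A tagged partition of `[a,b]`: division points `t 0 = a ≤ t 1 ≤ ⋯ ≤ t n = b`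
with a tag `tag i ∈ [t i, t (i+1)]` for each subinterval. -/
structure TaggedPartition (a b : ℝ) where
  n : ℕ
  t : ℕ → ℝ
  tag : ℕ → ℝ
  t_zero : t 0 = a
  t_last : t n = b
  mono : ∀ i < n, t i ≤ t (i + 1)
  tag_mem : ∀ i < n, tag i ∈ Set.Icc (t i) (t (i + 1))

/-- A gauge on `[a,b]` is a function that is positive on `[a,b]`. -/
def IsGauge (a b : ℝ) (δ : ℝ → ℝ) : Prop :=
  ∀ x ∈ Set.Icc a b, 0 < δ x

/-- `P` is `δ`-fine: each subinterval is contained in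
`(tag i - δ (tag i), tag i + δ (tag i))`. -/
def TaggedPartition.IsFine {a b : ℝ} (P : TaggedPartition a b) (δ : ℝ → ℝ) : Prop :=
  ∀ i < P.n, Set.Icc (P.t i) (P.t (i + 1)) ⊆
    Set.Ioo (P.tag i - δ (P.tag i)) (P.tag i + δ (P.tag i))

/-- Every subinterval of `P` that intersects `E` has its tag in `E`
(membership in the family `𝒫_δ[a,b]|_E`). -/
def TaggedPartition.TagsIn {a b : ℝ} (P : TaggedPartition a b) (E : Set ℝ) : Prop :=
  ∀ i < P.n, (Set.Icc (P.t i) (P.t (i + 1)) ∩ E).Nonempty → P.tag i ∈ E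

/-- The Riemann sum `Σ g(xᵢ)(bᵢ - aᵢ)` of `g` over `P`. -/
def TaggedPartition.riemannSum {a b : ℝ} (P : TaggedPartition a b) (g : ℝ → ℝ) : ℝ :=
  ∑ i ∈ Finset.range P.n, g (P.tag i) * (P.t (i + 1) - P.t i)

/-- The sum `Σ (F(bᵢ) - F(aᵢ))` of increments of `F` over the restriction `P|_E`,
i.e. over those pairs of `P` whose interval meets `E` and whose tag lies in `E`. -/
noncomputable def TaggedPartition.restSum {a b : ℝ} (P : TaggedPartition a b) (F : ℝ → ℝ)
    (E : Set ℝ) : ℝ :=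
  ∑ i ∈ Finset.range P.n,
    if (Set.Icc (P.t i) (P.t (i + 1)) ∩ E).Nonempty ∧ P.tag i ∈ E then
      F (P.t (i + 1)) - F (P.t i)
    else 0

/-- `F` is basically summable (BS_δ) on `E` to `R`. -/
def BasicallySummable (a b : ℝ) (F : ℝ → ℝ) (E : Set ℝ) (R : ℝ) : Prop :=
  ∀ ε > 0, ∃ δ : ℝ → ℝ, IsGauge a b δ ∧
    ∀ P : TaggedPartition a b, P.IsFine δ → P.TagsIn E → |P.restSum F E - R| < ε

/-- `g` is generalized Riemann (Henstock–Kurzweil) integrable on `[a,b]` to `I`,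
using `δ`-fine partitions in `𝒫_δ[a,b]|_E`. -/
def HKIntegrableTo (a b : ℝ) (E : Set ℝ) (g : ℝ → ℝ) (I : ℝ) : Prop :=
  ∀ ε > 0, ∃ δ : ℝ → ℝ, IsGauge a b δ ∧
    ∀ P : TaggedPartition a b, P.IsFine δ → P.TagsIn E → |P.riemannSum g - I| < ε

/-- `F` has negligible variation on `E`: for every `ε > 0` there is a gauge `δ`
such that `Σ_{P|_E} |F(bᵢ) - F(aᵢ)| < ε` for every `δ`-fine partition in
`𝒫_δ[a,b]|_E`. -/
noncomputable def NegligibleVariation (a b : ℝ) (F : ℝ → ℝ) (E : Set ℝ) : Prop :=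
  ∀ ε > 0, ∃ δ : ℝ → ℝ, IsGauge a b δ ∧
    ∀ P : TaggedPartition a b, P.IsFine δ → P.TagsIn E →
      (∑ i ∈ Finset.range P.n,
        if (Set.Icc (P.t i) (P.t (i + 1)) ∩ E).Nonempty ∧ P.tag i ∈ E then
          |F (P.t (i + 1)) - F (P.t i)|
        else 0) < ε

theorem TaggedPartition.t_mem_Icc {a b : ℝ} (P : TaggedPartition a b) (i : ℕ) (hi : i ≤ P.n) :
    P.t i ∈ Set.Icc a b := by
  constructor
  · induction i with
    | zero => exact P.t_zero.ge
    | succ k ih => exact (ih (by omega)).trans (P.mono k (by omega))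
  · induction hi using Nat.decreasingInduction with
    | self => exact P.t_last.le
    | of_succ k hk ih => exact (P.mono k hk).trans ih

/-- If `F` is differentiable with derivative `f` on `[a,b] \ E`,
where `E ⊂ (a,b)` has Lebesgue measure zero, and `F` has negligible variation on
`E`, then `f_ex` is Henstock–Kurzweil integrable on `[a,b]` with integral
`F b - F a`. -/
theorem statement3 (a b : ℝ) (hab : a ≤ b) (E : Set ℝ) (hE : E ⊆ Set.Ioo a b)
    (hE0 : MeasureTheory.volume E = 0) (F f : ℝ → ℝ)
    (hF : ∀ x ∈ Set.Icc a b \ E, HasDerivWithinAt F (f x) (Set.Icc a b) x)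
    (hNV : NegligibleVariation a b F E) :
    HKIntegrableTo a b E (fun x => if x ∈ E then 0 else f x) (F b - F a) := by
  intro ε hε
  obtain ⟨δ₁, hδ₁, h₁⟩ := hNV (ε / 2) (by linarith)
  have hba : 0 < b - a + 1 := by linarith
  obtain ⟨η, hη, hηε⟩ : ∃ η : ℝ, 0 < η ∧ η * (b - a) ≤ ε / 2 := by
    refine ⟨ε / 2 / (b - a + 1), by positivity, ?_⟩
    rw [div_mul_eq_mul_div, div_le_iff₀ hba]
    nlinarith
  have h₂ : ∀ x, ∃ d : ℝ, 0 < d ∧ (x ∈ Set.Icc a b \ E → ∀ y ∈ Set.Icc a b, |y - x| < d →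
      |F y - F x - (y - x) * f x| ≤ η * |y - x|) := by
    intro x
    by_cases hx : x ∈ Set.Icc a b \ E
    · have h := (hasDerivWithinAt_iff_isLittleO.1 (hF x hx)).def hη
      obtain ⟨d, hd, hd'⟩ := Metric.mem_nhdsWithin_iff.1 h
      refine ⟨d, hd, fun _ y hy hyd => ?_⟩
      have := hd' ⟨by simpa [Real.dist_eq] using hyd, hy⟩
      simpa [Real.norm_eq_abs] using this
    · exact ⟨1, one_pos, fun h => absurd h hx⟩
  choose δ₂ hδ₂ h₂ using h₂
  refine ⟨fun x => min (δ₁ x) (δ₂ x), fun x hx => lt_min (hδ₁ x hx) (hδ₂ x), ?_⟩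
  intro P hP hT
  have hP₁ : P.IsFine δ₁ := fun i hi y hy => by
    have h := hP i hi hy
    have := min_le_left (δ₁ (P.tag i)) (δ₂ (P.tag i))
    exact ⟨by linarith [h.1], by linarith [h.2]⟩
  have hS := h₁ P hP₁ hT
  have tel : F b - F a = ∑ i ∈ Finset.range P.n, (F (P.t (i + 1)) - F (P.t i)) := by
    rw [Finset.sum_range_sub (fun i => F (P.t i)), P.t_last, P.t_zero]
  have tel2 : b - a = ∑ i ∈ Finset.range P.n, (P.t (i + 1) - P.t i) := by
    rw [Finset.sum_range_sub (fun i => P.t i), P.t_last, P.t_zero]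
  have key : ∀ i ∈ Finset.range P.n,
      |(fun x => if x ∈ E then 0 else f x) (P.tag i) * (P.t (i + 1) - P.t i) -
        (F (P.t (i + 1)) - F (P.t i))| ≤
      (if (Set.Icc (P.t i) (P.t (i + 1)) ∩ E).Nonempty ∧ P.tag i ∈ E then
          |F (P.t (i + 1)) - F (P.t i)| else 0) + η * (P.t (i + 1) - P.t i) := by
    intro i hi
    have hi := Finset.mem_range.1 hi
    have hm := P.mono i hi
    have ht := P.tag_mem i hi
    by_cases hx : P.tag i ∈ E
    · have hc : (Set.Icc (P.t i) (P.t (i + 1)) ∩ E).Nonempty ∧ P.tag i ∈ E := ⟨⟨_, ht, hx⟩, hx⟩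
      rw [if_pos hc]
      simp only [hx, if_true, zero_mul, zero_sub, abs_neg]
      have : 0 ≤ η * (P.t (i + 1) - P.t i) := mul_nonneg hη.le (by linarith)
      linarith
    · rw [if_neg (fun h => hx h.2)]
      simp only [hx, if_false]
      have hu := P.t_mem_Icc i hi.le
      have hv := P.t_mem_Icc (i + 1) hi
      have hxm : P.tag i ∈ Set.Icc a b \ E := ⟨⟨hu.1.trans ht.1, ht.2.trans hv.2⟩, hx⟩
      have hmin := min_le_right (δ₁ (P.tag i)) (δ₂ (P.tag i))
      have fu := hP i hi (Set.left_mem_Icc.2 hm)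
      have fv := hP i hi (Set.right_mem_Icc.2 hm)
      have e1 := h₂ _ hxm _ hu (abs_lt.2 ⟨by linarith [fu.1], by linarith [fu.2]⟩)
      have e2 := h₂ _ hxm _ hv (abs_lt.2 ⟨by linarith [fv.1], by linarith [fv.2]⟩)
      rw [abs_of_nonpos (a := P.t i - P.tag i) (by linarith [ht.1])] at e1
      rw [abs_of_nonneg (a := P.t (i + 1) - P.tag i) (by linarith [ht.2])] at e2
      rw [abs_le] at e1 e2 ⊢
      constructor <;> linarith [e1.1, e1.2, e2.1, e2.2]
  rw [TaggedPartition.riemannSum, tel, ← Finset.sum_sub_distrib]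
  refine (Finset.abs_sum_le_sum_abs _ _).trans_lt ((Finset.sum_le_sum key).trans_lt ?_)
  rw [Finset.sum_add_distrib, ← Finset.mul_sum, ← tel2]
  linarith
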